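/- (Theorem 3.) If the joint distribution p_XY and the function g satisfy H(g(X,Y)) < I(X;Y), then for any functions f₁ and f₂ on 𝒳×𝒴 with finite ranges, the tuple (p_XY, f₁, f₂, g) is asymptotically securely computable with privacy against an eavesdropper. -/

import Mathlib

open scoped BigOperators

/-- A probability mass function on a finite type, given as a real-valued function. -/
def IsPMF {Ω : Type*} [Fintype Ω] (p : Ω → ℝ) : Prop :=
  (∀ ω, 0 ≤ p ω) ∧ ∑ ω, p ω = 1

open Classical in
/-- Probability of an event under a pmf on a finite type. -/
noncomputable def probOf {Ω : Type*} [Fintype Ω] (p : Ω → ℝ) (E : Ω → Prop) : ℝ :=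
  ∑ ω, if E ω then p ω else 0

/-- Distribution (pushforward) of a random variable `A` under pmf `p`. -/
noncomputable def distOf {Ω β : Type*} [Fintype Ω] [DecidableEq β]
    (p : Ω → ℝ) (A : Ω → β) : β → ℝ :=
  fun b => ∑ ω, if A ω = b then p ω else 0

/-- Shannon entropy (in nats) of a distribution on a finite type. -/
noncomputable def entD {β : Type*} [Fintype β] (q : β → ℝ) : ℝ :=
  -∑ b, q b * Real.log (q b)

/-- Shannon entropy H(A) of a random variable `A` under pmf `p`. -/
noncomputable def entRV {Ω β : Type*} [Fintype Ω] [Fintype β] [DecidableEq β]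
    (p : Ω → ℝ) (A : Ω → β) : ℝ :=
  entD (distOf p A)

/-- Conditional Shannon entropy H(A | C). -/
noncomputable def condEnt {Ω β γ : Type*} [Fintype Ω] [Fintype β] [DecidableEq β]
    [Fintype γ] [DecidableEq γ] (p : Ω → ℝ) (A : Ω → β) (C : Ω → γ) : ℝ :=
  entRV p (fun ω => (A ω, C ω)) - entRV p C

/-- Mutual information I(A; B). -/
noncomputable def mutInfo {Ω β γ : Type*} [Fintype Ω] [Fintype β] [DecidableEq β]
    [Fintype γ] [DecidableEq γ] (p : Ω → ℝ) (A : Ω → β) (B : Ω → γ) : ℝ :=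
  entRV p A + entRV p B - entRV p (fun ω => (A ω, B ω))

/-- Conditional mutual information I(A; B | C). -/
noncomputable def condMutInfo {Ω β γ δ : Type*} [Fintype Ω] [Fintype β] [DecidableEq β]
    [Fintype γ] [DecidableEq γ] [Fintype δ] [DecidableEq δ]
    (p : Ω → ℝ) (A : Ω → β) (B : Ω → γ) (C : Ω → δ) : ℝ :=
  entRV p (fun ω => (A ω, C ω)) + entRV p (fun ω => (B ω, C ω))
    - entRV p (fun ω => (A ω, B ω, C ω)) - entRV p C

/-- Privacy against Alice with respect to `g` of a transition kernel `k(m|x,y)`,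
for the function `f` being computed. -/
def PrivAlice {𝒳 𝒴 𝒵 𝒢 ℳ : Type*} (f : 𝒳 → 𝒴 → 𝒵) (g : 𝒳 → 𝒴 → 𝒢)
    (k : 𝒳 → 𝒴 → ℳ → ℝ) : Prop :=
  ∀ x y₁ y₂, g x y₁ ≠ g x y₂ → f x y₁ = f x y₂ → ∀ m, k x y₁ m = k x y₂ m

/-- Privacy against Bob with respect to `h` of a transition kernel `k(m|x,y)`,
for the function `f` being computed. -/
def PrivBob {𝒳 𝒴 𝒵 ℋ ℳ : Type*} (f : 𝒳 → 𝒴 → 𝒵) (h : 𝒳 → 𝒴 → ℋ)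
    (k : 𝒳 → 𝒴 → ℳ → ℝ) : Prop :=
  ∀ x₁ x₂ y, h x₁ y ≠ h x₂ y → f x₁ y = f x₂ y → ∀ m, k x₁ y m = k x₂ y m

/-- Transcript probability `p(m₁,…,m_t | x, y)` of an alternating interactive protocol with
`t` rounds and message alphabet `Fin mM`; Alice sends on even-indexed rounds (rounds
`0, 2, 4, …`, i.e. the 1st, 3rd, … messages) and Bob on odd-indexed rounds, each message
depending only on the sender's input and the past messages. -/
noncomputable def transProb {𝒳 𝒴 : Type*} {t mM : ℕ}
    (alice : ∀ i : Fin t, 𝒳 → (Fin i.val → Fin mM) → Fin mM → ℝ)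
    (bob : ∀ i : Fin t, 𝒴 → (Fin i.val → Fin mM) → Fin mM → ℝ)
    (x : 𝒳) (y : 𝒴) (m : Fin t → Fin mM) : ℝ :=
  ∏ i : Fin t,
    if i.val % 2 = 0 then alice i x (fun j => m (Fin.castLE i.isLt.le j)) (m i)
    else bob i y (fun j => m (Fin.castLE i.isLt.le j)) (m i)

/-- The relation `x₁ ∼ x₂` on `C` (relative to the submatrix `C × D`):
there is `y ∈ D` with `g x₁ y ≠ g x₂ y` and `f x₁ y = f x₂ y`. -/
def simX {𝒳 𝒴 𝒵 𝒢 : Type*} (f : 𝒳 → 𝒴 → 𝒵) (g : 𝒳 → 𝒴 → 𝒢)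
    (C : Set 𝒳) (D : Set 𝒴) (x₁ x₂ : 𝒳) : Prop :=
  x₁ ∈ C ∧ x₂ ∈ C ∧ ∃ y ∈ D, g x₁ y ≠ g x₂ y ∧ f x₁ y = f x₂ y

/-- The relation `y₁ ∼ y₂` on `D` (relative to the submatrix `C × D`):
there is `x ∈ C` with `h x y₁ ≠ h x y₂` and `f x y₁ = f x y₂`. -/
def simY {𝒳 𝒴 𝒵 ℋ : Type*} (f : 𝒳 → 𝒴 → 𝒵) (h : 𝒳 → 𝒴 → ℋ)
    (C : Set 𝒳) (D : Set 𝒴) (y₁ y₂ : 𝒴) : Prop :=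
  y₁ ∈ D ∧ y₂ ∈ D ∧ ∃ x ∈ C, h x y₁ ≠ h x y₂ ∧ f x y₁ = f x y₂

/-- The submatrix `C × D` of the matrix `R = (f(x,y))` is monochromatic: `f` is constant
on `C × D`. -/
def Monochromatic {𝒳 𝒴 𝒵 : Type*} (f : 𝒳 → 𝒴 → 𝒵) (C : Set 𝒳) (D : Set 𝒴) : Prop :=
  ∀ x₁ ∈ C, ∀ y₁ ∈ D, ∀ x₂ ∈ C, ∀ y₂ ∈ D, f x₁ y₁ = f x₂ y₂

/-- The submatrix `C × D` is forbidden: it is not monochromatic, all elements of `C` are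
equivalent under the reflexive-transitive closure of `∼` on `C`, and all elements of `D`
are equivalent under the reflexive-transitive closure of `∼` on `D`. -/
def Forbidden {𝒳 𝒴 𝒵 𝒢 ℋ : Type*} (f : 𝒳 → 𝒴 → 𝒵) (g : 𝒳 → 𝒴 → 𝒢) (h : 𝒳 → 𝒴 → ℋ)
    (C : Set 𝒳) (D : Set 𝒴) : Prop :=
  ¬ Monochromatic f C D ∧
  (∀ x₁ ∈ C, ∀ x₂ ∈ C, Relation.ReflTransGen (simX f g C D) x₁ x₂) ∧
  (∀ y₁ ∈ D, ∀ y₂ ∈ D, Relation.ReflTransGen (simY f h C D) y₁ y₂)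

/-- Joint law of `(XYⁿ, transcript, Z₁ⁿ, Z₂ⁿ)` induced by `n` i.i.d. copies of `pXY`, an
alternating interactive protocol with `r` rounds and message alphabet `Fin mM` on the
block inputs, and the users' output kernels. -/
noncomputable def jointEaves {𝒳 𝒴 𝒵₁ 𝒵₂ : Type} (pXY : 𝒳 × 𝒴 → ℝ) (n r mM : ℕ)
    (alice : ∀ i : Fin r, (Fin n → 𝒳) → (Fin i.val → Fin mM) → Fin mM → ℝ)
    (bob : ∀ i : Fin r, (Fin n → 𝒴) → (Fin i.val → Fin mM) → Fin mM → ℝ)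
    (outA : (Fin n → 𝒳) → (Fin r → Fin mM) → (Fin n → 𝒵₁) → ℝ)
    (outB : (Fin n → 𝒴) → (Fin r → Fin mM) → (Fin n → 𝒵₂) → ℝ) :
    (Fin n → 𝒳 × 𝒴) × (Fin r → Fin mM) × (Fin n → 𝒵₁) × (Fin n → 𝒵₂) → ℝ :=
  fun ω => (∏ i, pXY (ω.1 i)) *
    transProb alice bob (fun i => (ω.1 i).1) (fun i => (ω.1 i).2) ω.2.1 *
    outA (fun i => (ω.1 i).1) ω.2.1 ω.2.2.1 *
    outB (fun i => (ω.1 i).2) ω.2.1 ω.2.2.2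

/-- The tuple `(pXY, f₁, f₂, g)` is asymptotically securely computable with privacy
against an eavesdropper: for every `ε > 0` there are a blocklength `n` and an interactive
protocol with outputs such that `P((Z₁ⁿ, Z₂ⁿ) ≠ (F₁ⁿ, F₂ⁿ)) ≤ ε` and
`I(M; Gⁿ) ≤ n ε`, where `M` is the transcript. -/
def AsympSecEavesdropper {𝒳 𝒴 𝒵₁ 𝒵₂ 𝒢 : Type}
    [Fintype 𝒳] [DecidableEq 𝒳] [Fintype 𝒴] [DecidableEq 𝒴]
    [Fintype 𝒵₁] [DecidableEq 𝒵₁] [Fintype 𝒵₂] [DecidableEq 𝒵₂]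
    [Fintype 𝒢] [DecidableEq 𝒢]
    (pXY : 𝒳 × 𝒴 → ℝ) (f₁ : 𝒳 → 𝒴 → 𝒵₁) (f₂ : 𝒳 → 𝒴 → 𝒵₂) (g : 𝒳 → 𝒴 → 𝒢) : Prop :=
  ∀ ε : ℝ, 0 < ε → ∃ (n r mM : ℕ), 0 < n ∧
    ∃ (alice : ∀ i : Fin r, (Fin n → 𝒳) → (Fin i.val → Fin mM) → Fin mM → ℝ)
      (bob : ∀ i : Fin r, (Fin n → 𝒴) → (Fin i.val → Fin mM) → Fin mM → ℝ)
      (outA : (Fin n → 𝒳) → (Fin r → Fin mM) → (Fin n → 𝒵₁) → ℝ)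
      (outB : (Fin n → 𝒴) → (Fin r → Fin mM) → (Fin n → 𝒵₂) → ℝ),
      (∀ (i : Fin r) (xv : Fin n → 𝒳) (past : Fin i.val → Fin mM),
          (∀ m, 0 ≤ alice i xv past m) ∧ ∑ m, alice i xv past m = 1) ∧
      (∀ (i : Fin r) (yv : Fin n → 𝒴) (past : Fin i.val → Fin mM),
          (∀ m, 0 ≤ bob i yv past m) ∧ ∑ m, bob i yv past m = 1) ∧
      (∀ (xv : Fin n → 𝒳) (m : Fin r → Fin mM),
          (∀ z, 0 ≤ outA xv m z) ∧ ∑ z, outA xv m z = 1) ∧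
      (∀ (yv : Fin n → 𝒴) (m : Fin r → Fin mM),
          (∀ z, 0 ≤ outB yv m z) ∧ ∑ z, outB yv m z = 1) ∧
      probOf (jointEaves pXY n r mM alice bob outA outB)
        (fun ω => (ω.2.2.1, ω.2.2.2) ≠
          ((fun i => f₁ (ω.1 i).1 (ω.1 i).2), (fun i => f₂ (ω.1 i).1 (ω.1 i).2))) ≤ ε ∧
      mutInfo (jointEaves pXY n r mM alice bob outA outB)
        (fun ω => ω.2.1)
        (fun ω => fun i => g (ω.1 i).1 (ω.1 i).2) ≤ n * ε

namespace SecEav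
open Finset
set_option linter.unusedSectionVars false

section General
variable {V β γ : Type*} [Fintype V] [Fintype β] [DecidableEq β] [Fintype γ] [DecidableEq γ]

lemma sum_comp (P : V → ℝ) (A : V → β) (F : β → ℝ) :
    ∑ v, P v * F (A v) = ∑ b, distOf P A b * F b := by
  unfold distOf
  simp_rw [Finset.sum_mul]
  rw [Finset.sum_comm]
  refine Finset.sum_congr rfl fun v _ => ?_
  simp [ite_mul]

lemma entRV_eq (P : V → ℝ) (A : V → β) :
    entRV P A = -∑ v, P v * Real.log (distOf P A (A v)) := by
  unfold entRV entD
  rw [sum_comp P A (fun b => Real.log (distOf P A b))]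

lemma le_distOf {P : V → ℝ} (hP : ∀ v, 0 ≤ P v) (A : V → β) (v : V) :
    P v ≤ distOf P A (A v) := by
  unfold distOf
  have := Finset.single_le_sum (f := fun w => if A w = A v then P w else 0)
    (fun w _ => by split_ifs <;> simp [hP]) (Finset.mem_univ v)
  simpa using this

lemma distOf_nonneg {P : V → ℝ} (hP : ∀ v, 0 ≤ P v) (A : V → β) (b : β) :
    0 ≤ distOf P A b :=
  Finset.sum_nonneg fun w _ => by split_ifs <;> simp [hP]

lemma sum_distOf (P : V → ℝ) (A : V → β) : ∑ b, distOf P A b = ∑ v, P v := by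
  have := sum_comp P A (fun _ => 1)
  simpa using this.symm

lemma gibbs {P : V → ℝ} (hP : IsPMF P) (A : V → β) (r : β → ℝ) (hr : ∀ b, 0 ≤ r b)
    (hr1 : ∑ b, r b ≤ 1) (hpos : ∀ v, 0 < P v → 0 < r (A v)) :
    ∑ v, P v * Real.log (r (A v)) ≤ ∑ v, P v * Real.log (distOf P A (A v)) := by
  have h1 : ∀ v, P v * Real.log (r (A v)) - P v * Real.log (distOf P A (A v)) ≤
      P v * (r (A v) / distOf P A (A v)) - P v := by
    intro v
    rcases (hP.1 v).eq_or_lt with h | h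
    · simp [← h]
    · have hq : 0 < distOf P A (A v) := h.trans_le (le_distOf hP.1 A v)
      have := Real.log_le_sub_one_of_pos (div_pos (hpos v h) hq)
      rw [Real.log_div (hpos v h).ne' hq.ne'] at this
      nlinarith
  have h2 := Finset.sum_le_sum fun v (_ : v ∈ (Finset.univ : Finset V)) => h1 v
  rw [Finset.sum_sub_distrib, Finset.sum_sub_distrib, hP.2,
    sum_comp P A (fun b => r b / distOf P A b)] at h2
  have h3 : ∑ b, distOf P A b * (r b / distOf P A b) ≤ ∑ b, r b := by
    refine Finset.sum_le_sum fun b _ => ?_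
    rcases (distOf_nonneg hP.1 A b).eq_or_lt with h | h
    · rw [← h]; simp [hr]
    · rw [mul_div_cancel₀ _ h.ne']
  linarith

lemma entRV_congr (P : V → ℝ) (A : V → β) (B : V → γ) (h : ∀ v w, A v = A w ↔ B v = B w) :
    entRV P A = entRV P B := by
  rw [entRV_eq, entRV_eq]
  simp only [distOf, h]

end General

section Hash
variable {α : Type*} [Fintype α] [DecidableEq α]

lemma hash_count (M : ℕ) [NeZero M] {a a' : α} (h : a ≠ a') :
    (M : ℝ) * ∑ k : α → Fin M, (if k a = k a' then (1 : ℝ) else 0) =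
      Fintype.card (α → Fin M) := by
  have key : ∀ c : Fin M, ∑ k : α → Fin M, (if k a = k a' then (1 : ℝ) else 0) =
      ∑ k : α → Fin M, (if k a + c = k a' then (1 : ℝ) else 0) := by
    intro c
    symm
    refine Fintype.sum_equiv
      { toFun := fun k => Function.update k a (k a + c)
        invFun := fun k => Function.update k a (k a - c)
        left_inv := fun k => by simp
        right_inv := fun k => by simp } _ _ ?_
    intro k
    simp [Function.update_of_ne h.symm]
  have h2 : (M : ℝ) * ∑ k : α → Fin M, (if k a = k a' then (1 : ℝ) else 0) =
      ∑ c : Fin M, ∑ k : α → Fin M, (if k a + c = k a' then (1 : ℝ) else 0) := by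
    rw [← Finset.sum_congr rfl fun c _ => key c]
    simp
  rw [h2, Finset.sum_comm]
  have h3 : ∀ k : α → Fin M, ∑ c : Fin M, (if k a + c = k a' then (1 : ℝ) else 0) = 1 := by
    intro k
    have : ∀ c : Fin M, (k a + c = k a') ↔ (c = k a' - k a) := by
      intro c
      constructor
      · intro h; rw [← h]; simp
      · intro h; rw [h]; simp
    simp [this]
  simp [h3]

lemma hash_le (M : ℕ) [NeZero M] (a a' : α) :
    ∑ k : α → Fin M, (if k a = k a' then (1 : ℝ) else 0) ≤
      Fintype.card (α → Fin M) * ((if a = a' then 1 else 0) + 1 / (M : ℝ)) := by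
  have hM : (0 : ℝ) < M := by exact_mod_cast Nat.pos_of_ne_zero (NeZero.ne M)
  by_cases h : a = a'
  · subst h
    simp only [if_true, Finset.sum_const, nsmul_eq_mul, mul_one]
    have : (0 : ℝ) ≤ 1 / (M : ℝ) := by positivity
    have h2 : (0 : ℝ) ≤ Fintype.card (α → Fin M) := by positivity
    rw [Finset.card_univ]
    nlinarith
  · have := hash_count M h
    rw [if_neg h, ← this]
    apply le_of_eq
    field_simp
    ring

end Hash

section OneShot
variable {V α β γ : Type*} [Fintype V] [Fintype α] [DecidableEq α] [Fintype β] [DecidableEq β]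
  [Fintype γ] [DecidableEq γ]

/-- Privacy defect. -/
noncomputable def defect (P : V → ℝ) (A : V → α) (B : V → β) (G : V → γ) {M₁ M₂ : ℕ}
    (k₁ : α → Fin M₁) (k₂ : β → Fin M₂) : ℝ :=
  ∑ v, P v * (Real.log ((M₁ : ℝ) * M₂) - Real.log (distOf P G (G v)) +
    Real.log (distOf P (fun v => ((k₁ (A v), k₂ (B v)), G v)) ((k₁ (A v), k₂ (B v)), G v)))

lemma defect_eq {P : V → ℝ} (hP : IsPMF P) (A : V → α) (B : V → β) (G : V → γ) {M₁ M₂ : ℕ}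
    (k₁ : α → Fin M₁) (k₂ : β → Fin M₂) :
    defect P A B G k₁ k₂ = Real.log ((M₁ : ℝ) * M₂) + entRV P G -
      entRV P (fun v => ((k₁ (A v), k₂ (B v)), G v)) := by
  rw [entRV_eq, entRV_eq]
  unfold defect
  simp only [mul_add, mul_sub, Finset.sum_add_distrib, Finset.sum_sub_distrib]
  rw [← Finset.sum_mul, hP.2]
  ring

lemma mutInfo_le_defect {P : V → ℝ} (hP : IsPMF P) (A : V → α) (B : V → β) (G : V → γ)
    {M₁ M₂ : ℕ} [NeZero M₁] [NeZero M₂]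
    (k₁ : α → Fin M₁) (k₂ : β → Fin M₂) :
    mutInfo P (fun v => (k₁ (A v), k₂ (B v))) G ≤ defect P A B G k₁ k₂ := by
  rw [defect_eq hP]
  unfold mutInfo
  have h1 : (0 : ℝ) < M₁ := by exact_mod_cast Nat.pos_of_ne_zero (NeZero.ne M₁)
  have h2 : (0 : ℝ) < M₂ := by exact_mod_cast Nat.pos_of_ne_zero (NeZero.ne M₂)
  have := gibbs hP (fun v => (k₁ (A v), k₂ (B v))) (fun _ => ((M₁ : ℝ) * M₂)⁻¹)
    (fun _ => by positivity) (by
      simp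
      apply le_of_eq
      field_simp) (fun _ _ => by positivity)
  rw [← Finset.sum_mul, hP.2, Real.log_inv] at this
  rw [entRV_eq P (fun v => (k₁ (A v), k₂ (B v)))]
  linarith

lemma defect_nonneg {P : V → ℝ} (hP : IsPMF P) (A : V → α) (B : V → β) (G : V → γ)
    {M₁ M₂ : ℕ} [NeZero M₁] [NeZero M₂]
    (k₁ : α → Fin M₁) (k₂ : β → Fin M₂) :
    0 ≤ defect P A B G k₁ k₂ := by
  have h1 : (0 : ℝ) < M₁ := by exact_mod_cast Nat.pos_of_ne_zero (NeZero.ne M₁)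
  have h2 : (0 : ℝ) < M₂ := by exact_mod_cast Nat.pos_of_ne_zero (NeZero.ne M₂)
  have := gibbs hP (fun v => ((k₁ (A v), k₂ (B v)), G v))
    (fun b => ((M₁ : ℝ) * M₂)⁻¹ * distOf P G b.2)
    (fun b => mul_nonneg (by positivity) (distOf_nonneg hP.1 _ _)) (by
      rw [← Finset.mul_sum, Fintype.sum_prod_type]
      simp only [sum_distOf, hP.2]
      simp
      apply le_of_eq
      field_simp) (fun v hv => mul_pos (by positivity) (hv.trans_le (le_distOf hP.1 G v)))
  unfold defect
  rw [← sub_nonneg, ← Finset.sum_sub_distrib] at this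
  refine this.trans (Finset.sum_le_sum fun v _ => ?_)
  rcases (hP.1 v).eq_or_lt with h | h
  · simp [← h]
  · have hq : 0 < distOf P G (G v) := h.trans_le (le_distOf hP.1 G v)
    simp only
    rw [Real.log_mul (by positivity) hq.ne', Real.log_inv]
    apply le_of_eq
    ring

/-- The averaged collision mass. -/
noncomputable def ymass (P : V → ℝ) (A : V → α) (B : V → β) (G : V → γ) (M₁ M₂ : ℕ) (v : V) : ℝ :=
  P v + distOf P A (A v) / M₂ + distOf P B (B v) / M₁ + distOf P G (G v) / ((M₁ : ℝ) * M₂)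

lemma collision_avg {P : V → ℝ} (hP : IsPMF P) (A : V → α) (B : V → β) (G : V → γ)
    (hAB : ∀ v w, A v = A w → B v = B w → v = w)
    (M₁ M₂ : ℕ) [NeZero M₁] [NeZero M₂] (v : V) :
    ∑ k₁ : α → Fin M₁, ∑ k₂ : β → Fin M₂,
      distOf P (fun v => ((k₁ (A v), k₂ (B v)), G v)) ((k₁ (A v), k₂ (B v)), G v) ≤
    (Fintype.card (α → Fin M₁) : ℝ) * Fintype.card (β → Fin M₂) * ymass P A B G M₁ M₂ v := by
  classical
  have h1 : (0 : ℝ) < M₁ := by exact_mod_cast Nat.pos_of_ne_zero (NeZero.ne M₁)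
  have h2 : (0 : ℝ) < M₂ := by exact_mod_cast Nat.pos_of_ne_zero (NeZero.ne M₂)
  set N₁ : ℝ := ((Fintype.card (α → Fin M₁) : ℕ) : ℝ) with hN₁
  set N₂ : ℝ := ((Fintype.card (β → Fin M₂) : ℕ) : ℝ) with hN₂
  have hN₁0 : 0 ≤ N₁ := by positivity
  have hN₂0 : 0 ≤ N₂ := by positivity
  unfold ymass distOf
  have e1 : ∑ k₁ : α → Fin M₁, ∑ k₂ : β → Fin M₂,
      ∑ w, (if ((k₁ (A w), k₂ (B w)), G w) = ((k₁ (A v), k₂ (B v)), G v) then P w else 0) =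
      ∑ w, (if G w = G v then P w else 0) *
        ((∑ k₁ : α → Fin M₁, (if k₁ (A w) = k₁ (A v) then (1 : ℝ) else 0)) *
         (∑ k₂ : β → Fin M₂, (if k₂ (B w) = k₂ (B v) then (1 : ℝ) else 0))) := by
    simp_rw [Finset.sum_mul_sum, Finset.mul_sum]
    trans ∑ w, ∑ k₁ : α → Fin M₁, ∑ k₂ : β → Fin M₂,
      (if ((k₁ (A w), k₂ (B w)), G w) = ((k₁ (A v), k₂ (B v)), G v) then P w else 0)
    · symm
      rw [Finset.sum_comm]
      refine Finset.sum_congr rfl fun k₁ _ => ?_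
      rw [Finset.sum_comm]
    refine Finset.sum_congr rfl fun w _ => ?_
    refine Finset.sum_congr rfl fun k₁ _ => Finset.sum_congr rfl fun k₂ _ => ?_
    simp only [Prod.mk.injEq]
    by_cases a : k₁ (A w) = k₁ (A v) <;> by_cases b : k₂ (B w) = k₂ (B v) <;>
      by_cases c : G w = G v <;> simp [a, b, c]
  rw [e1]
  have e2 : N₁ * N₂ * (P v + (∑ w, if A w = A v then P w else 0) / M₂ +
      (∑ w, if B w = B v then P w else 0) / M₁ +
      (∑ w, if G w = G v then P w else 0) / ((M₁ : ℝ) * M₂)) =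
      ∑ w, N₁ * N₂ * ((if w = v then P w else 0) + (if A w = A v then P w else 0) / M₂ +
      (if B w = B v then P w else 0) / M₁ + (if G w = G v then P w else 0) / ((M₁ : ℝ) * M₂)) := by
    rw [← Finset.mul_sum, Finset.sum_add_distrib, Finset.sum_add_distrib, Finset.sum_add_distrib]
    simp only [Finset.sum_div]
    simp
  rw [e2]
  refine Finset.sum_le_sum fun w _ => ?_
  have a1 := hash_le M₁ (A w) (A v)
  have a2 := hash_le M₂ (B w) (B v)
  rw [← hN₁] at a1
  rw [← hN₂] at a2
  have hmul := mul_le_mul a1 a2 (Finset.sum_nonneg fun _ _ => by split_ifs <;> simp)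
    (mul_nonneg hN₁0 (by split_ifs <;> positivity))
  have hg : 0 ≤ (if G w = G v then P w else 0) := by split_ifs <;> simp [hP.1]
  refine (mul_le_mul_of_nonneg_left hmul hg).trans ?_
  have hw := hP.1 w
  have q1 : 0 ≤ N₁ * N₂ * P w := by positivity
  by_cases c : G w = G v
  · simp only [c, if_true]
    have hiff : w = v ↔ A w = A v ∧ B w = B v :=
      ⟨fun h => by simp [h], fun h => hAB _ _ h.1 h.2⟩
    apply le_of_eq
    by_cases a : A w = A v <;> by_cases b : B w = B v <;> simp [a, b, hiff] <;> field_simp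
    all_goals try ring
  · simp only [c, if_false, zero_mul, zero_div, add_zero]
    refine mul_nonneg (by positivity) ?_
    have r1 : 0 ≤ (if w = v then P w else 0) := by split_ifs <;> simp [hw]
    have r2 : 0 ≤ (if A w = A v then P w else 0) / (M₂ : ℝ) := by
      apply div_nonneg _ h2.le
      split_ifs <;> simp [hw]
    have r3 : 0 ≤ (if B w = B v then P w else 0) / (M₁ : ℝ) := by
      apply div_nonneg _ h1.le
      split_ifs <;> simp [hw]
    linarith

lemma defect_avg {P : V → ℝ} (hP : IsPMF P) (A : V → α) (B : V → β) (G : V → γ)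
    (hAB : ∀ v w, A v = A w → B v = B w → v = w)
    (M₁ M₂ : ℕ) [NeZero M₁] [NeZero M₂] :
    ∑ k₁ : α → Fin M₁, ∑ k₂ : β → Fin M₂, defect P A B G k₁ k₂ ≤
    (Fintype.card (α → Fin M₁) : ℝ) * Fintype.card (β → Fin M₂) *
      ∑ v, P v * (Real.log ((M₁ : ℝ) * M₂) - Real.log (distOf P G (G v)) +
        Real.log (ymass P A B G M₁ M₂ v)) := by
  have h1 : (0 : ℝ) < M₁ := by exact_mod_cast Nat.pos_of_ne_zero (NeZero.ne M₁)
  have h2 : (0 : ℝ) < M₂ := by exact_mod_cast Nat.pos_of_ne_zero (NeZero.ne M₂)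
  unfold defect
  rw [Finset.mul_sum]
  simp_rw [Finset.sum_comm (s := (Finset.univ : Finset (β → Fin M₂)))]
  rw [Finset.sum_comm]
  refine Finset.sum_le_sum fun v _ => ?_
  rcases (hP.1 v).eq_or_lt with h | h
  · simp [← h]
  have hy : 0 < ymass P A B G M₁ M₂ v := by
    unfold ymass
    have := distOf_nonneg hP.1 A (A v)
    have := distOf_nonneg hP.1 B (B v)
    have := distOf_nonneg hP.1 G (G v)
    positivity
  have hc := collision_avg hP A B G hAB M₁ M₂ v
  set y := ymass P A B G M₁ M₂ v with hydef
  set N₁ : ℝ := ((Fintype.card (α → Fin M₁) : ℕ) : ℝ) with hN₁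
  set N₂ : ℝ := ((Fintype.card (β → Fin M₂) : ℕ) : ℝ) with hN₂
  set C := Real.log ((M₁ : ℝ) * M₂) - Real.log (distOf P G (G v)) with hC
  simp_rw [← Finset.mul_sum]
  have key : ∀ (k₁ : α → Fin M₁) (k₂ : β → Fin M₂),
      C + Real.log (distOf P (fun v => ((k₁ (A v), k₂ (B v)), G v)) ((k₁ (A v), k₂ (B v)), G v)) ≤
      (C + Real.log y - 1) +
        distOf P (fun v => ((k₁ (A v), k₂ (B v)), G v)) ((k₁ (A v), k₂ (B v)), G v) * y⁻¹ := by
    intro k₁ k₂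
    have hq : 0 < distOf P (fun v => ((k₁ (A v), k₂ (B v)), G v)) ((k₁ (A v), k₂ (B v)), G v) :=
      h.trans_le (le_distOf hP.1 (fun v => ((k₁ (A v), k₂ (B v)), G v)) v)
    have := Real.log_le_sub_one_of_pos (div_pos hq hy)
    rw [Real.log_div hq.ne' hy.ne', div_eq_mul_inv] at this
    linarith
  have s := Finset.sum_le_sum fun k₁ (_ : k₁ ∈ (Finset.univ : Finset (α → Fin M₁))) =>
    Finset.sum_le_sum fun k₂ (_ : k₂ ∈ (Finset.univ : Finset (β → Fin M₂))) => key k₁ k₂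
  have t : ∑ k₁ : α → Fin M₁, ∑ k₂ : β → Fin M₂, ((C + Real.log y - 1) +
        distOf P (fun v => ((k₁ (A v), k₂ (B v)), G v)) ((k₁ (A v), k₂ (B v)), G v) * y⁻¹) ≤
        N₁ * N₂ * (C + Real.log y) := by
    simp_rw [Finset.sum_add_distrib, ← Finset.sum_mul]
    have hc' := mul_le_mul_of_nonneg_right hc (inv_nonneg.2 hy.le)
    rw [mul_assoc _ y, mul_inv_cancel₀ hy.ne'] at hc'
    simp only [Finset.sum_const, Finset.card_univ, nsmul_eq_mul]
    rw [← hN₁, ← hN₂]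
    linarith
  calc P v * _ ≤ P v * (N₁ * N₂ * (C + Real.log y)) :=
        mul_le_mul_of_nonneg_left (s.trans t) h.le
    _ = _ := by ring

end OneShot

section Decode
variable {V α β : Type*} [Fintype V] [Fintype α] [DecidableEq α] [Fintype β] [DecidableEq β]

open Classical in
/-- Threshold decoder. -/
noncomputable def dec (P : V → ℝ) (A : V → α) (B : V → β) (τ : ℝ) (v₀ : V) {M : ℕ}
    (k : α → Fin M) (b : β) (m : Fin M) : V :=
  if h : ∃ v, B v = b ∧ k (A v) = m ∧ τ * distOf P B b ≤ P v then h.choose else v₀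

open Classical in
/-- Error probability of the threshold decoder. -/
noncomputable def decErr (P : V → ℝ) (A : V → α) (B : V → β) (τ : ℝ) (v₀ : V) {M : ℕ}
    (k : α → Fin M) : ℝ :=
  ∑ v, if dec P A B τ v₀ k (B v) (k (A v)) = v then 0 else P v

lemma decErr_nonneg {P : V → ℝ} (hP : IsPMF P) (A : V → α) (B : V → β) (τ : ℝ) (v₀ : V) {M : ℕ}
    (k : α → Fin M) : 0 ≤ decErr P A B τ v₀ k :=
  Finset.sum_nonneg fun v _ => by split_ifs <;> simp [hP.1]

lemma decErr_avg {P : V → ℝ} (hP : IsPMF P) (A : V → α) (B : V → β) {τ : ℝ} (hτ : 0 < τ) (v₀ : V)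
    (hAB : ∀ v w, A v = A w → B v = B w → v = w) (M : ℕ) [NeZero M] :
    ∑ k : α → Fin M, decErr P A B τ v₀ k ≤ ((Fintype.card (α → Fin M) : ℕ) : ℝ) *
      ((∑ v, if P v < τ * distOf P B (B v) then P v else 0) + 1 / (τ * M)) := by
  classical
  have hM : (0 : ℝ) < M := by exact_mod_cast Nat.pos_of_ne_zero (NeZero.ne M)
  set N : ℝ := ((Fintype.card (α → Fin M) : ℕ) : ℝ) with hN
  have hN0 : 0 ≤ N := by positivity
  have e : N * ((∑ v, if P v < τ * distOf P B (B v) then P v else 0) + 1 / (τ * M)) =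
      ∑ v, (N * (if P v < τ * distOf P B (B v) then P v else 0) + P v * (N * (1 / (τ * M)))) := by
    rw [Finset.sum_add_distrib, ← Finset.sum_mul, hP.2, ← Finset.mul_sum]
    ring
  rw [e]
  unfold decErr
  rw [Finset.sum_comm]
  refine Finset.sum_le_sum fun v _ => ?_
  rcases (hP.1 v).eq_or_lt with h | h
  · simp [← h]
  have hPB : 0 < distOf P B (B v) := h.trans_le (le_distOf hP.1 B v)
  by_cases hb : P v < τ * distOf P B (B v)
  · simp only [hb, if_true]
    have : ∑ k : α → Fin M, (if dec P A B τ v₀ k (B v) (k (A v)) = v then 0 else P v) ≤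
        ∑ k : α → Fin M, P v := Finset.sum_le_sum fun k _ => by split_ifs <;> simp [h.le]
    rw [Finset.sum_const, Finset.card_univ, nsmul_eq_mul, ← hN] at this
    have h3 : 0 ≤ P v * (N * (1 / (τ * M))) := by positivity
    linarith
  · simp only [hb, if_false, mul_zero, zero_add]
    have pw : ∀ k : α → Fin M, (if dec P A B τ v₀ k (B v) (k (A v)) = v then 0 else P v) ≤
        P v * ∑ w, (if B w = B v ∧ A w ≠ A v ∧ τ * distOf P B (B v) ≤ P w then (1 : ℝ) else 0) *
          (if k (A w) = k (A v) then (1 : ℝ) else 0) := by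
      intro k
      have nn : ∀ w, 0 ≤ (if B w = B v ∧ A w ≠ A v ∧ τ * distOf P B (B v) ≤ P w
          then (1 : ℝ) else 0) * (if k (A w) = k (A v) then (1 : ℝ) else 0) := by
        intro w
        split_ifs <;> simp
      split_ifs with hd
      · exact mul_nonneg h.le (Finset.sum_nonneg fun w _ => nn w)
      · have hex : ∃ w, B w = B v ∧ k (A w) = k (A v) ∧ τ * distOf P B (B v) ≤ P w :=
          ⟨v, rfl, rfl, not_lt.1 hb⟩
        have hdec : dec P A B τ v₀ k (B v) (k (A v)) = hex.choose := by
          unfold dec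
          rw [dif_pos hex]
        obtain ⟨c1, c2, c3⟩ := hex.choose_spec
        rw [hdec] at hd
        have hA : A hex.choose ≠ A v := fun hA => hd (hAB _ _ hA c1)
        have := Finset.single_le_sum (fun w _ => nn w) (Finset.mem_univ hex.choose)
        rw [if_pos ⟨c1, hA, c3⟩, if_pos c2] at this
        nlinarith
    refine (Finset.sum_le_sum fun k _ => pw k).trans ?_
    rw [← Finset.mul_sum]
    refine mul_le_mul_of_nonneg_left ?_ h.le
    rw [Finset.sum_comm]
    simp_rw [← Finset.mul_sum]
    have pw2 : ∀ w, (if B w = B v ∧ A w ≠ A v ∧ τ * distOf P B (B v) ≤ P w then (1 : ℝ) else 0) *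
          ∑ k : α → Fin M, (if k (A w) = k (A v) then (1 : ℝ) else 0) ≤
        (if B w = B v then P w else 0) * (N / M / (τ * distOf P B (B v))) := by
      intro w
      have hw := hP.1 w
      by_cases c : B w = B v ∧ A w ≠ A v ∧ τ * distOf P B (B v) ≤ P w
      · rw [if_pos c, if_pos c.1, one_mul]
        have hc := hash_count M c.2.1
        rw [← hN] at hc
        have : ∑ k : α → Fin M, (if k (A w) = k (A v) then (1 : ℝ) else 0) = N / M := by
          rw [eq_div_iff hM.ne', mul_comm]; exact hc
        rw [this, ← mul_div_assoc, le_div_iff₀ (by positivity), mul_comm]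
        exact mul_le_mul_of_nonneg_right c.2.2 (by positivity)
      · rw [if_neg c, zero_mul]
        refine mul_nonneg ?_ (by positivity)
        split_ifs <;> simp [hw]
    refine (Finset.sum_le_sum fun w _ => pw2 w).trans ?_
    rw [← Finset.sum_mul]
    change distOf P B (B v) * _ ≤ _
    apply le_of_eq
    field_simp

end Decode

section IID
variable {W : Type*} [Fintype W]

/-- i.i.d. product. -/
noncomputable def Pn (p : W → ℝ) (n : ℕ) (v : Fin n → W) : ℝ := ∏ i, p (v i)

lemma sum_prod_fun (n : ℕ) (F : Fin n → W → ℝ) :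
    ∑ v : Fin n → W, ∏ i, F i (v i) = ∏ i, ∑ w, F i w := by
  classical
  rw [Finset.prod_univ_sum]
  simp

lemma Pn_pmf {p : W → ℝ} (hp : IsPMF p) (n : ℕ) : IsPMF (Pn p n) := by
  refine ⟨fun v => Finset.prod_nonneg fun i _ => hp.1 _, ?_⟩
  unfold Pn
  rw [sum_prod_fun n (fun _ => p)]
  simp [hp.2]

lemma distOf_Pn {β : Type*} [DecidableEq β] (p : W → ℝ) (n : ℕ) (a : W → β) (b : Fin n → β) :
    distOf (Pn p n) (fun v i => a (v i)) b = ∏ i, distOf p a (b i) := by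
  unfold distOf
  rw [← sum_prod_fun n (fun i w => if a w = b i then p w else 0)]
  refine Finset.sum_congr rfl fun v _ => ?_
  unfold Pn
  by_cases h : (fun i => a (v i)) = b
  · subst h; simp
  · rw [if_neg h]
    obtain ⟨i, hi⟩ := Function.ne_iff.1 h
    exact (Finset.prod_eq_zero (Finset.mem_univ i) (by simp [hi])).symm

lemma moments {p : W → ℝ} (hp : IsPMF p) (t : W → ℝ) (ht : ∑ w, p w * t w = 0) (n : ℕ) :
    ∑ v, Pn p n v * ∑ i, t (v i) = 0 ∧
    ∑ v, Pn p n v * (∑ i, t (v i)) ^ 2 = n * ∑ w, p w * t w ^ 2 := by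
  induction n with
  | zero => simp
  | succ n ih =>
    obtain ⟨ih1, ih2⟩ := ih
    have one := (Pn_pmf hp n).2
    have split : ∀ F : (Fin (n+1) → W) → ℝ, ∑ v, F v = ∑ w, ∑ v : Fin n → W, F (Fin.cons w v) := by
      intro F
      rw [← Fintype.sum_prod_type' (f := fun w v => F (Fin.cons w v))]
      exact (Fintype.sum_equiv (Fin.consEquiv (fun _ => W)) _ _ (fun x => rfl)).symm
    have hPc : ∀ w v, Pn p (n+1) (Fin.cons w v) = p w * Pn p n v := by
      intro w v
      simp [Pn, Fin.prod_univ_succ]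
    constructor
    · rw [split]
      have : ∀ w, ∑ v : Fin n → W, Pn p (n+1) (Fin.cons w v) *
          ∑ i, t ((Fin.cons w v : Fin (n+1) → W) i) = p w * t w := by
        intro w
        calc _ = ∑ v : Fin n → W, (p w * t w * Pn p n v + p w * (Pn p n v * ∑ i, t (v i))) := by
              refine Finset.sum_congr rfl fun v _ => ?_
              rw [hPc, Fin.sum_univ_succ]
              simp only [Fin.cons_zero, Fin.cons_succ]
              ring
          _ = _ := by
              rw [Finset.sum_add_distrib, ← Finset.mul_sum, ← Finset.mul_sum, one, ih1]; ring
      simp_rw [this]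
      exact ht
    · rw [split]
      have : ∀ w, ∑ v : Fin n → W, Pn p (n+1) (Fin.cons w v) *
          (∑ i, t ((Fin.cons w v : Fin (n+1) → W) i)) ^ 2 =
          p w * t w ^ 2 + p w * (n * ∑ w, p w * t w ^ 2) := by
        intro w
        calc _ = ∑ v : Fin n → W, (p w * t w ^ 2 * Pn p n v +
                2 * p w * t w * (Pn p n v * ∑ i, t (v i)) +
                p w * (Pn p n v * (∑ i, t (v i)) ^ 2)) := by
              refine Finset.sum_congr rfl fun v _ => ?_
              rw [hPc, Fin.sum_univ_succ]
              simp only [Fin.cons_zero, Fin.cons_succ]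
              ring
          _ = _ := by
              rw [Finset.sum_add_distrib, Finset.sum_add_distrib, ← Finset.mul_sum,
                ← Finset.mul_sum, ← Finset.mul_sum, one, ih1, ih2]; ring
      simp_rw [this]
      rw [Finset.sum_add_distrib, ← Finset.sum_mul, hp.2]
      push_cast
      ring

/-- mean -/
noncomputable def mean (p s : W → ℝ) : ℝ := ∑ w, p w * s w
/-- variance -/
noncomputable def vari (p s : W → ℝ) : ℝ := ∑ w, p w * (s w - mean p s) ^ 2

lemma vari_nonneg {p : W → ℝ} (hp : IsPMF p) (s : W → ℝ) : 0 ≤ vari p s :=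
  Finset.sum_nonneg fun w _ => mul_nonneg (hp.1 w) (sq_nonneg _)

lemma second_moment {p : W → ℝ} (hp : IsPMF p) (s : W → ℝ) (n : ℕ) :
    ∑ v, Pn p n v * (∑ i, s (v i) - n * mean p s) ^ 2 = n * vari p s := by
  have := (moments hp (fun w => s w - mean p s) (by
    simp only [mul_sub, Finset.sum_sub_distrib, ← Finset.sum_mul, hp.2]
    simp [mean]) n).2
  simpa [Finset.sum_sub_distrib, vari] using this

lemma cheb {p : W → ℝ} (hp : IsPMF p) (s : W → ℝ) {n : ℕ} (hn : 0 < n) {δ : ℝ} (hδ : 0 < δ) :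
    ∑ v, (if ∑ i, s (v i) < n * (mean p s - δ) then Pn p n v else 0) ≤ vari p s / (n * δ ^ 2) := by
  have hn' : (0 : ℝ) < n := by exact_mod_cast hn
  rw [le_div_iff₀ (by positivity)]
  have h := second_moment hp s n
  have : (∑ v, (if ∑ i, s (v i) < n * (mean p s - δ) then Pn p n v else 0)) * (n * δ) ^ 2 ≤
      n * vari p s := by
    rw [← h, Finset.sum_mul]
    refine Finset.sum_le_sum fun v _ => ?_
    have hv := (Pn_pmf hp n).1 v
    split_ifs with hc
    · refine mul_le_mul_of_nonneg_left ?_ hv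
      have : 0 < n * δ := by positivity
      nlinarith
    · rw [zero_mul]; positivity
  nlinarith

lemma pospart {p : W → ℝ} (hp : IsPMF p) (s : W → ℝ) {n : ℕ} (hn : 0 < n) {η c : ℝ} (hη : 0 < η)
    (hc : c + n * mean p s ≤ 0) :
    ∑ v, Pn p n v * max 0 (c + ∑ i, s (v i)) ≤ vari p s / (2 * η) + n * η / 2 := by
  have hn' : (0 : ℝ) < n := by exact_mod_cast hn
  have h := second_moment hp s n
  have pw : ∀ v, Pn p n v * max 0 (c + ∑ i, s (v i)) ≤
      Pn p n v * (∑ i, s (v i) - n * mean p s) ^ 2 * (1 / (2 * n * η)) +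
        Pn p n v * (n * η / 2) := by
    intro v
    have hv := (Pn_pmf hp n).1 v
    rw [mul_assoc, ← mul_add]
    refine mul_le_mul_of_nonneg_left ?_ hv
    set T := ∑ i, s (v i) - n * mean p s with hT
    have e : T ^ 2 * (1 / (2 * n * η)) + n * η / 2 - T = (T - n * η) ^ 2 / (2 * n * η) := by
      field_simp
      ring
    have e2 : 0 ≤ (T - n * η) ^ 2 / (2 * n * η) := by positivity
    refine max_le (by positivity) ?_
    linarith
  refine (Finset.sum_le_sum fun v _ => pw v).trans ?_
  rw [Finset.sum_add_distrib, ← Finset.sum_mul, ← Finset.sum_mul, h, (Pn_pmf hp n).2]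
  apply le_of_eq
  field_simp

lemma log_prod {n : ℕ} (q : W → ℝ) (v : Fin n → W) (h : ∀ i, 0 < q (v i)) :
    Real.log (∏ i, q (v i)) = ∑ i, Real.log (q (v i)) :=
  Real.log_prod fun i _ => (h i).ne'

lemma Pn_pos {p : W → ℝ} (hp : IsPMF p) {n : ℕ} {v : Fin n → W} (h : 0 < Pn p n v) (i : Fin n) :
    0 < p (v i) := by
  refine lt_of_le_of_ne (hp.1 _) fun h0 => ?_
  have : Pn p n v = 0 := Finset.prod_eq_zero (Finset.mem_univ i) h0.symm
  linarith

end IID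

lemma log4 {a b c : ℝ} : Real.log (1 + Real.exp a + Real.exp b + Real.exp c) ≤
    Real.log 4 + max 0 a + max 0 b + max 0 c := by
  have ha := le_max_left 0 a
  have hb := le_max_left 0 b
  have hc := le_max_left 0 c
  have ha' := le_max_right 0 a
  have hb' := le_max_right 0 b
  have hc' := le_max_right 0 c
  set s := max 0 a + max 0 b + max 0 c with hs
  have h1 : 1 ≤ Real.exp s := Real.one_le_exp (by linarith)
  have h2 : Real.exp a ≤ Real.exp s := Real.exp_le_exp.2 (by linarith)
  have h3 : Real.exp b ≤ Real.exp s := Real.exp_le_exp.2 (by linarith)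
  have h4 : Real.exp c ≤ Real.exp s := Real.exp_le_exp.2 (by linarith)
  have : Real.log (1 + Real.exp a + Real.exp b + Real.exp c) ≤ Real.log (4 * Real.exp s) :=
    Real.log_le_log (by positivity) (by linarith)
  rw [Real.log_mul (by norm_num) (Real.exp_pos _).ne', Real.log_exp] at this
  linarith


section Protocol

lemma graph_sum {V R : Type*} [Fintype V] [Fintype R] [DecidableEq R] (P : V → ℝ) (D : V → R)
    (J : V × R → ℝ) (hJ : ∀ ω, J ω = if ω.2 = D ω.1 then P ω.1 else 0)
    (E : V × R → Prop) [DecidablePred E] :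
    ∑ ω, (if E ω then J ω else 0) = ∑ v, if E (v, D v) then P v else 0 := by
  rw [Fintype.sum_prod_type]
  refine Finset.sum_congr rfl fun v _ => ?_
  rw [Finset.sum_eq_single (D v)]
  · simp [hJ]
  · intro b _ hb
    simp [hJ, hb]
  · simp

lemma distOf_graph {V R β : Type*} [Fintype V] [Fintype R] [DecidableEq R] [DecidableEq β]
    (P : V → ℝ) (D : V → R)
    (J : V × R → ℝ) (hJ : ∀ ω, J ω = if ω.2 = D ω.1 then P ω.1 else 0) (F : V × R → β) :
    distOf J F = distOf P (fun v => F (v, D v)) := by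
  funext b
  exact graph_sum P D J hJ (fun ω => F ω = b)

lemma mutInfo_graph {V R β γ : Type*} [Fintype V] [Fintype R] [DecidableEq R] [Fintype β]
    [DecidableEq β] [Fintype γ] [DecidableEq γ]
    (P : V → ℝ) (D : V → R)
    (J : V × R → ℝ) (hJ : ∀ ω, J ω = if ω.2 = D ω.1 then P ω.1 else 0) (F : V × R → β)
    (F' : V × R → γ) :
    mutInfo J F F' = mutInfo P (fun v => F (v, D v)) (fun v => F' (v, D v)) := by
  unfold mutInfo entRV
  rw [distOf_graph P D J hJ, distOf_graph P D J hJ, distOf_graph P D J hJ]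

/-- Left part. -/
def unL {M₁ M₂ : ℕ} [NeZero M₁] (j : Fin (M₁ + M₂)) : Fin M₁ :=
  Fin.addCases (fun a => a) (fun _ => 0) j

/-- Right part. -/
def unR {M₁ M₂ : ℕ} [NeZero M₂] (j : Fin (M₁ + M₂)) : Fin M₂ :=
  Fin.addCases (fun _ => 0) (fun a => a) j

lemma protocol {𝒳 𝒴 𝒵₁ 𝒵₂ 𝒢 : Type}
    [Fintype 𝒳] [DecidableEq 𝒳] [Fintype 𝒴] [DecidableEq 𝒴]
    [Fintype 𝒵₁] [DecidableEq 𝒵₁] [Fintype 𝒵₂] [DecidableEq 𝒵₂]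
    [Fintype 𝒢] [DecidableEq 𝒢]
    (pXY : 𝒳 × 𝒴 → ℝ) (hp : IsPMF pXY) (g : 𝒳 → 𝒴 → 𝒢)
    (f₁ : 𝒳 → 𝒴 → 𝒵₁) (f₂ : 𝒳 → 𝒴 → 𝒵₂) (n M₁ M₂ : ℕ) (hn : 0 < n) [NeZero M₁] [NeZero M₂]
    (k₁ : (Fin n → 𝒳) → Fin M₁) (k₂ : (Fin n → 𝒴) → Fin M₂) (τ₁ τ₂ : ℝ)
    (v₀ : Fin n → 𝒳 × 𝒴) (ε : ℝ)
    (herr : decErr (Pn pXY n) (fun v i => (v i).1) (fun v i => (v i).2) τ₁ v₀ k₁ +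
      decErr (Pn pXY n) (fun v i => (v i).2) (fun v i => (v i).1) τ₂ v₀ k₂ ≤ ε)
    (hmi : mutInfo (Pn pXY n) (fun v => (k₁ (fun i => (v i).1), k₂ (fun i => (v i).2)))
      (fun v i => g (v i).1 (v i).2) ≤ n * ε) :
    ∃ (n r mM : ℕ), 0 < n ∧
    ∃ (alice : ∀ i : Fin r, (Fin n → 𝒳) → (Fin i.val → Fin mM) → Fin mM → ℝ)
      (bob : ∀ i : Fin r, (Fin n → 𝒴) → (Fin i.val → Fin mM) → Fin mM → ℝ)
      (outA : (Fin n → 𝒳) → (Fin r → Fin mM) → (Fin n → 𝒵₁) → ℝ)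
      (outB : (Fin n → 𝒴) → (Fin r → Fin mM) → (Fin n → 𝒵₂) → ℝ),
      (∀ (i : Fin r) (xv : Fin n → 𝒳) (past : Fin i.val → Fin mM),
          (∀ m, 0 ≤ alice i xv past m) ∧ ∑ m, alice i xv past m = 1) ∧
      (∀ (i : Fin r) (yv : Fin n → 𝒴) (past : Fin i.val → Fin mM),
          (∀ m, 0 ≤ bob i yv past m) ∧ ∑ m, bob i yv past m = 1) ∧
      (∀ (xv : Fin n → 𝒳) (m : Fin r → Fin mM),
          (∀ z, 0 ≤ outA xv m z) ∧ ∑ z, outA xv m z = 1) ∧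
      (∀ (yv : Fin n → 𝒴) (m : Fin r → Fin mM),
          (∀ z, 0 ≤ outB yv m z) ∧ ∑ z, outB yv m z = 1) ∧
      probOf (jointEaves pXY n r mM alice bob outA outB)
        (fun ω => (ω.2.2.1, ω.2.2.2) ≠
          ((fun i => f₁ (ω.1 i).1 (ω.1 i).2), (fun i => f₂ (ω.1 i).1 (ω.1 i).2))) ≤ ε ∧
      mutInfo (jointEaves pXY n r mM alice bob outA outB)
        (fun ω => ω.2.1)
        (fun ω => fun i => g (ω.1 i).1 (ω.1 i).2) ≤ n * ε := by
  classical
  let DB : (Fin n → 𝒴) → Fin M₁ → (Fin n → 𝒳 × 𝒴) :=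
    dec (Pn pXY n) (fun v i => (v i).1) (fun v i => (v i).2) τ₁ v₀ k₁
  let DA : (Fin n → 𝒳) → Fin M₂ → (Fin n → 𝒳 × 𝒴) :=
    dec (Pn pXY n) (fun v i => (v i).2) (fun v i => (v i).1) τ₂ v₀ k₂
  let φ₁ : (Fin n → 𝒳 × 𝒴) → (Fin n → 𝒵₁) := fun v i => f₁ (v i).1 (v i).2
  let φ₂ : (Fin n → 𝒳 × 𝒴) → (Fin n → 𝒵₂) := fun v i => f₂ (v i).1 (v i).2
  let alice : ∀ i : Fin 2, (Fin n → 𝒳) → (Fin i.val → Fin (M₁ + M₂)) → Fin (M₁ + M₂) → ℝ :=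
    fun _ x _ m => if m = Fin.castAdd M₂ (k₁ x) then 1 else 0
  let bob : ∀ i : Fin 2, (Fin n → 𝒴) → (Fin i.val → Fin (M₁ + M₂)) → Fin (M₁ + M₂) → ℝ :=
    fun _ y _ m => if m = Fin.natAdd M₁ (k₂ y) then 1 else 0
  let outA : (Fin n → 𝒳) → (Fin 2 → Fin (M₁ + M₂)) → (Fin n → 𝒵₁) → ℝ :=
    fun x m z => if z = φ₁ (DA x (unR (m 1))) then 1 else 0
  let outB : (Fin n → 𝒴) → (Fin 2 → Fin (M₁ + M₂)) → (Fin n → 𝒵₂) → ℝ :=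
    fun y m z => if z = φ₂ (DB y (unL (m 0))) then 1 else 0
  let T : (Fin n → 𝒳 × 𝒴) → (Fin 2 → Fin (M₁ + M₂)) := fun v =>
    ![Fin.castAdd M₂ (k₁ (fun i => (v i).1)), Fin.natAdd M₁ (k₂ (fun i => (v i).2))]
  let D : (Fin n → 𝒳 × 𝒴) → (Fin 2 → Fin (M₁ + M₂)) × (Fin n → 𝒵₁) × (Fin n → 𝒵₂) := fun v =>
    (T v, φ₁ (DA (fun i => (v i).1) (k₂ (fun i => (v i).2))),
      φ₂ (DB (fun i => (v i).2) (k₁ (fun i => (v i).1))))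
  have hJ : ∀ ω, jointEaves pXY n 2 (M₁ + M₂) alice bob outA outB ω =
      if ω.2 = D ω.1 then Pn pXY n ω.1 else 0 := by
    rintro ⟨v, m, z₁, z₂⟩
    have htr : transProb alice bob (fun i => (v i).1) (fun i => (v i).2) m =
        if m = T v then 1 else 0 := by
      unfold transProb
      rw [Fin.prod_univ_two]
      have : m = T v ↔ m 0 = Fin.castAdd M₂ (k₁ (fun i => (v i).1)) ∧
          m 1 = Fin.natAdd M₁ (k₂ (fun i => (v i).2)) := by
        constructor
        · intro h; rw [h]; simp [T]
        · rintro ⟨h0, h1⟩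
          funext i
          fin_cases i
          · simpa [T] using h0
          · simpa [T] using h1
      simp only [this]
      by_cases h0 : m 0 = Fin.castAdd M₂ (k₁ (fun i => (v i).1)) <;>
      by_cases h1 : m 1 = Fin.natAdd M₁ (k₂ (fun i => (v i).2)) <;> simp [alice, bob, h0, h1]
    unfold jointEaves
    simp only [htr]
    change Pn pXY n v * _ * _ * _ = _
    by_cases hm : m = T v
    · subst hm
      have e1 : unR (T v 1) = k₂ (fun i => (v i).2) := by simp [T, unR]
      have e0 : unL (T v 0) = k₁ (fun i => (v i).1) := by simp [T, unL]
      simp only [outA, outB, e0, e1, D, Prod.mk.injEq, true_and, if_true, mul_one]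
      by_cases h0 : z₁ = φ₁ (DA (fun i => (v i).1) (k₂ (fun i => (v i).2))) <;>
      by_cases h1 : z₂ = φ₂ (DB (fun i => (v i).2) (k₁ (fun i => (v i).1))) <;> simp [h0, h1]
    · simp [hm, D]
  refine ⟨n, 2, M₁ + M₂, hn, alice, bob, outA, outB, ?_, ?_, ?_, ?_, ?_, ?_⟩
  · intro i x past
    exact ⟨fun m => by simp only [alice]; split_ifs <;> simp, by simp [alice]⟩
  · intro i x past
    exact ⟨fun m => by simp only [bob]; split_ifs <;> simp, by simp [bob]⟩
  · intro x m
    exact ⟨fun m => by simp only [outA]; split_ifs <;> simp, by simp [outA]⟩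
  · intro x m
    exact ⟨fun m => by simp only [outB]; split_ifs <;> simp, by simp [outB]⟩
  · unfold probOf
    refine (le_of_eq (@graph_sum _ _ _ _ _ (Pn pXY n) D _ hJ (fun ω => (ω.2.2.1, ω.2.2.2) ≠
      ((fun i => f₁ (ω.1 i).1 (ω.1 i).2), (fun i => f₂ (ω.1 i).1 (ω.1 i).2)))
      (fun _ => Classical.propDecidable _))).trans ?_
    refine le_trans ?_ herr
    unfold decErr
    rw [← Finset.sum_add_distrib]
    refine Finset.sum_le_sum fun v _ => ?_
    have hv := (Pn_pmf hp n).1 v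
    have a1 : (0 : ℝ) ≤ (@ite ℝ (DB (fun i => (v i).2) (k₁ (fun i => (v i).1)) = v)
      (Classical.propDecidable _) 0 (Pn pXY n v)) := by split_ifs <;> simp [hv]
    have a2 : (0 : ℝ) ≤ (@ite ℝ (DA (fun i => (v i).1) (k₂ (fun i => (v i).2)) = v)
      (Classical.propDecidable _) 0 (Pn pXY n v)) := by split_ifs <;> simp [hv]
    change _ ≤ (@ite ℝ (DB (fun i => (v i).2) (k₁ (fun i => (v i).1)) = v)
      (Classical.propDecidable _) 0 (Pn pXY n v)) + (@ite ℝ (DA (fun i => (v i).1) (k₂ (fun i => (v i).2)) = v)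
      (Classical.propDecidable _) 0 (Pn pXY n v))
    by_cases hB : DB (fun i => (v i).2) (k₁ (fun i => (v i).1)) = v
    · by_cases hA : DA (fun i => (v i).1) (k₂ (fun i => (v i).2)) = v
      · rw [if_neg]
        · linarith
        · simp only [D, hA, hB, φ₁, φ₂, ne_eq, not_true_eq_false, not_false_eq_true]
      · rw [if_neg hA]
        split_ifs <;> linarith
    · rw [if_neg hB]
      split_ifs <;> linarith
  · rw [mutInfo_graph (Pn pXY n) D _ hJ]
    refine le_trans (le_of_eq ?_) hmi
    have hT : ∀ v w, T v = T w ↔ (k₁ (fun i => (v i).1), k₂ (fun i => (v i).2)) =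
        (k₁ (fun i => (w i).1), k₂ (fun i => (w i).2)) := by
      intro v w
      constructor
      · intro h
        have h0 := congrFun h 0
        have h1 := congrFun h 1
        simp [T] at h0 h1
        simp [h0, h1]
      · intro h
        simp only [Prod.mk.injEq] at h
        simp [T, h.1, h.2]
    unfold mutInfo
    rw [entRV_congr (Pn pXY n) (fun v => (D v).1)
      (fun v => (k₁ (fun i => (v i).1), k₂ (fun i => (v i).2))) hT,
      entRV_congr (Pn pXY n) (fun v => ((D v).1, fun i => g (v i).1 (v i).2))
      (fun v => ((k₁ (fun i => (v i).1), k₂ (fun i => (v i).2)), fun i => g (v i).1 (v i).2))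
      (fun v w => by
        have := hT v w
        constructor
        · intro h
          rw [Prod.mk.injEq] at h ⊢
          exact ⟨this.1 h.1, h.2⟩
        · intro h
          rw [Prod.mk.injEq] at h ⊢
          exact ⟨this.2 h.1, h.2⟩)]

end Protocol

section Rates
variable {W : Type*} [Fintype W]

lemma Pn_exp {p : W → ℝ} (hp : IsPMF p) {n : ℕ} {v : Fin n → W} (h : 0 < Pn p n v) :
    Pn p n v = Real.exp (∑ i, Real.log (p (v i))) := by
  rw [← log_prod p v (Pn_pos hp h)]
  exact (Real.exp_log h).symm

lemma distOf_exp {β : Type*} [Fintype β] [DecidableEq β] {p : W → ℝ} (hp : IsPMF p) (b : W → β)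
    {n : ℕ} {v : Fin n → W} (h : 0 < Pn p n v) :
    distOf (Pn p n) (fun v i => b (v i)) (fun i => b (v i)) =
      Real.exp (∑ i, Real.log (distOf p b (b (v i)))) := by
  have hpos : ∀ i, 0 < distOf p b (b (v i)) := fun i =>
    (Pn_pos hp h i).trans_le (le_distOf hp.1 b (v i))
  rw [distOf_Pn, ← log_prod (fun w => distOf p b (b w)) v hpos,
    Real.exp_log (Finset.prod_pos fun i _ => hpos i)]

lemma bad_le {β : Type*} [Fintype β] [DecidableEq β] {p : W → ℝ} (hp : IsPMF p) (b : W → β)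
    {n : ℕ} (hn : 0 < n) {δ τ : ℝ} (hδ : 0 < δ)
    (hτ : τ = Real.exp (n * (mean p (fun w => Real.log (p w) - Real.log (distOf p b (b w))) - δ))) :
    (∑ v, if Pn p n v < τ * distOf (Pn p n) (fun v i => b (v i)) (fun i => b (v i))
      then Pn p n v else 0) ≤
      vari p (fun w => Real.log (p w) - Real.log (distOf p b (b w))) / (n * δ ^ 2) := by
  refine le_trans (Finset.sum_le_sum fun v _ => ?_) (cheb hp _ hn hδ)
  rcases ((Pn_pmf hp n).1 v).eq_or_lt with h | h
  · simp [← h]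
  rw [distOf_exp hp b h]
  split_ifs with h1 h2 h2
  · exact le_rfl
  · exfalso
    apply h2
    rw [Pn_exp hp h, hτ, ← Real.exp_add, Real.exp_lt_exp] at h1
    rw [Finset.sum_sub_distrib]
    linarith
  · exact h.le
  · exact le_rfl

lemma defect_pointwise {α β γ : Type*} [Fintype α] [DecidableEq α] [Fintype β] [DecidableEq β]
    [Fintype γ] [DecidableEq γ] {p : W → ℝ} (hp : IsPMF p) (a : W → α) (b : W → β) (g : W → γ)
    {n : ℕ} (M₁ M₂ : ℕ) [NeZero M₁] [NeZero M₂] {v : Fin n → W} (h : 0 < Pn p n v) :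
    Real.log ((M₁ : ℝ) * M₂) -
      Real.log (distOf (Pn p n) (fun v i => g (v i)) (fun i => g (v i))) +
      Real.log (ymass (Pn p n) (fun v i => a (v i)) (fun v i => b (v i)) (fun v i => g (v i))
        M₁ M₂ v) ≤
    Real.log 4 +
      max 0 (Real.log M₁ + Real.log M₂ +
        ∑ i, (Real.log (p (v i)) - Real.log (distOf p g (g (v i))))) +
      max 0 (Real.log M₁ +
        ∑ i, (Real.log (distOf p a (a (v i))) - Real.log (distOf p g (g (v i))))) +
      max 0 (Real.log M₂ +
        ∑ i, (Real.log (distOf p b (b (v i))) - Real.log (distOf p g (g (v i))))) := by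
  have h1 : (0 : ℝ) < M₁ := by exact_mod_cast Nat.pos_of_ne_zero (NeZero.ne M₁)
  have h2 : (0 : ℝ) < M₂ := by exact_mod_cast Nat.pos_of_ne_zero (NeZero.ne M₂)
  refine le_trans (le_of_eq ?_) log4
  unfold ymass
  rw [distOf_exp hp a h, distOf_exp hp b h, distOf_exp hp g h, Pn_exp hp h]
  simp only [Finset.sum_sub_distrib]
  set x := ∑ i, Real.log (p (v i))
  set xa := ∑ i, Real.log (distOf p a (a (v i)))
  set xb := ∑ i, Real.log (distOf p b (b (v i)))
  set xg := ∑ i, Real.log (distOf p g (g (v i)))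
  rw [← Real.log_div (by positivity) (by positivity), ← Real.log_mul (by positivity)
    (by positivity)]
  congr 1
  simp only [Real.exp_add, Real.exp_sub, Real.exp_log h1, Real.exp_log h2]
  field_simp
  ring

end Rates

lemma ceil_exp {x : ℝ} (hx : 0 ≤ x) : Real.log (⌈Real.exp x⌉₊ : ℝ) ≤ x + Real.log 2 := by
  have h1 : 1 ≤ Real.exp x := Real.one_le_exp hx
  have h2 := Nat.ceil_lt_add_one (Real.exp_pos x).le
  have h3 : (0 : ℝ) < (⌈Real.exp x⌉₊ : ℝ) := (Real.exp_pos x).trans_le (Nat.le_ceil _)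
  have := Real.log_le_log h3 (show (⌈Real.exp x⌉₊ : ℝ) ≤ Real.exp x * 2 by linarith)
  rwa [Real.log_mul (Real.exp_pos _).ne' (by norm_num), Real.log_exp] at this

lemma mean_sub {W : Type*} [Fintype W] (p s t : W → ℝ) :
    mean p (fun w => s w - t w) = mean p s - mean p t := by
  simp [mean, mul_sub, Finset.sum_sub_distrib]

lemma mean_log_le {W β : Type*} [Fintype W] [Fintype β] [DecidableEq β] {p : W → ℝ}
    (hp : IsPMF p) (b : W → β) :
    mean p (fun w => Real.log (p w)) ≤ mean p (fun w => Real.log (distOf p b (b w))) := by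
  refine Finset.sum_le_sum fun w _ => ?_
  rcases (hp.1 w).eq_or_lt with h | h
  · simp [← h]
  · exact mul_le_mul_of_nonneg_left (Real.log_le_log h (le_distOf hp.1 b w)) h.le

lemma exists_good {𝒳 𝒴 𝒢 : Type}
    [Fintype 𝒳] [DecidableEq 𝒳] [Fintype 𝒴] [DecidableEq 𝒴]
    [Fintype 𝒢] [DecidableEq 𝒢]
    (p : 𝒳 × 𝒴 → ℝ) (hp : IsPMF p) (g : 𝒳 → 𝒴 → 𝒢)
    (hent : entRV p (fun xy => g xy.1 xy.2) < mutInfo p Prod.fst Prod.snd)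
    (ε : ℝ) (hε : 0 < ε) :
    ∃ (n M₁ M₂ : ℕ) (_ : 0 < n) (_ : NeZero M₁) (_ : NeZero M₂)
      (k₁ : (Fin n → 𝒳) → Fin M₁) (k₂ : (Fin n → 𝒴) → Fin M₂) (τ₁ τ₂ : ℝ)
      (v₀ : Fin n → 𝒳 × 𝒴),
      decErr (Pn p n) (fun v i => (v i).1) (fun v i => (v i).2) τ₁ v₀ k₁ +
        decErr (Pn p n) (fun v i => (v i).2) (fun v i => (v i).1) τ₂ v₀ k₂ ≤ ε ∧
      mutInfo (Pn p n) (fun v => (k₁ (fun i => (v i).1), k₂ (fun i => (v i).2)))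
        (fun v i => g (v i).1 (v i).2) ≤ n * ε := by
  have hne : Nonempty (𝒳 × 𝒴) := by
    by_contra hcon
    rw [not_nonempty_iff] at hcon
    have := hp.2
    simp at this
  obtain ⟨w₀⟩ := hne
  let gg : 𝒳 × 𝒴 → 𝒢 := fun w => g w.1 w.2
  set lp : 𝒳 × 𝒴 → ℝ := fun w => Real.log (p w) with hlp
  set lX : 𝒳 × 𝒴 → ℝ := fun w => Real.log (distOf p Prod.fst w.1) with hlX
  set lY : 𝒳 × 𝒴 → ℝ := fun w => Real.log (distOf p Prod.snd w.2) with hlY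
  set lG : 𝒳 × 𝒴 → ℝ := fun w => Real.log (distOf p gg (gg w)) with hlG
  set HP := - mean p lp with hHP
  set HX := - mean p lX with hHX
  set HY := - mean p lY with hHY
  set HG := - mean p lG with hHG
  have hXP : HX ≤ HP := neg_le_neg (mean_log_le hp Prod.fst)
  have hYP : HY ≤ HP := neg_le_neg (mean_log_le hp Prod.snd)
  have hgap : 0 < HX + HY - HP - HG := by
    unfold mutInfo at hent
    have e0 : entRV p (fun ω : 𝒳 × 𝒴 => (ω.1, ω.2)) = HP := by
      rw [entRV_eq, hHP]
      unfold mean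
      congr 1
      refine Finset.sum_congr rfl fun w _ => ?_
      congr 2
      simp [distOf]
    rw [e0, entRV_eq p gg, entRV_eq p Prod.fst, entRV_eq p Prod.snd] at hent
    change HG < HX + HY - HP at hent
    linarith
  set Δ := HX + HY - HP - HG with hΔ
  set δ := Δ / 8 with hδ
  have hδ0 : 0 < δ := by positivity
  set U1 := vari p (fun w => lp w - lY w) with hU1
  set U2 := vari p (fun w => lp w - lX w) with hU2
  set S0 := vari p (fun w => lp w - lG w) with hS0
  set S1 := vari p (fun w => lX w - lG w) with hS1
  set S2 := vari p (fun w => lY w - lG w) with hS2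
  set η := ε / 6 with hη
  have hη0 : 0 < η := by positivity
  set C := U1 / δ ^ 2 + 1 / δ + (U2 / δ ^ 2 + 1 / δ) +
    (Real.log 4 + (S0 / (2 * η) + S1 / (2 * η) + S2 / (2 * η))) with hC
  obtain ⟨n, hn⟩ := exists_nat_gt (max (max (2 * Real.log 2 / (4 * δ)) (C / (ε / 2))) 0)
  rw [max_lt_iff, max_lt_iff] at hn
  obtain ⟨⟨hnl, hnC⟩, hn0⟩ := hn
  have hnpos : 0 < n := by exact_mod_cast hn0
  rw [div_lt_iff₀ (by positivity)] at hnl hnC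
  have hlog2 : 0 < Real.log 2 := Real.log_pos (by norm_num)
  set r1 := HP - HY + 2 * δ with hr1
  set r2 := HP - HX + 2 * δ with hr2
  have hr1n : 0 ≤ n * r1 := mul_nonneg hn0.le (by linarith)
  have hr2n : 0 ≤ n * r2 := mul_nonneg hn0.le (by linarith)
  set M₁ := ⌈Real.exp (n * r1)⌉₊ with hM₁
  set M₂ := ⌈Real.exp (n * r2)⌉₊ with hM₂
  have hM₁l : Real.exp (n * r1) ≤ M₁ := Nat.le_ceil _
  have hM₂l : Real.exp (n * r2) ≤ M₂ := Nat.le_ceil _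
  have hM₁u : Real.log M₁ ≤ n * r1 + Real.log 2 := ceil_exp hr1n
  have hM₂u : Real.log M₂ ≤ n * r2 + Real.log 2 := ceil_exp hr2n
  have i1 : NeZero M₁ := ⟨(Nat.ceil_pos.2 (Real.exp_pos _)).ne'⟩
  have i2 : NeZero M₂ := ⟨(Nat.ceil_pos.2 (Real.exp_pos _)).ne'⟩
  have m1 : (0 : ℝ) < M₁ := by exact_mod_cast Nat.pos_of_ne_zero (NeZero.ne M₁)
  have m2 : (0 : ℝ) < M₂ := by exact_mod_cast Nat.pos_of_ne_zero (NeZero.ne M₂)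
  clear_value M₁ M₂
  set A : (Fin n → 𝒳 × 𝒴) → (Fin n → 𝒳) := fun v i => (v i).1 with hA
  set B : (Fin n → 𝒳 × 𝒴) → (Fin n → 𝒴) := fun v i => (v i).2 with hB
  set G : (Fin n → 𝒳 × 𝒴) → (Fin n → 𝒢) := fun v i => gg (v i) with hG
  have hAB : ∀ v w, A v = A w → B v = B w → v = w := fun v w h1 h2 =>
    funext fun i => Prod.ext (congrFun h1 i) (congrFun h2 i)
  have hPn := Pn_pmf hp n
  let v₀ : Fin n → 𝒳 × 𝒴 := fun _ => w₀
  set τ₁ := Real.exp (n * (mean p (fun w => lp w - lY w) - δ)) with hτ₁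
  set τ₂ := Real.exp (n * (mean p (fun w => lp w - lX w) - δ)) with hτ₂
  have expb : Real.exp (-(n * δ)) ≤ 1 / δ / n := by
    rw [Real.exp_neg, div_div, one_div]
    apply inv_anti₀ (by positivity)
    have := Real.add_one_le_exp (n * δ)
    linarith
  have tM₁ : 1 / (τ₁ * M₁) ≤ 1 / δ / n := by
    refine le_trans ?_ expb
    rw [Real.exp_neg, one_div]
    apply inv_anti₀ (Real.exp_pos _)
    calc Real.exp (n * δ) = τ₁ * Real.exp (n * r1) := by
          rw [hτ₁, ← Real.exp_add, mean_sub, hr1, hHP, hHY]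
          congr 1
          ring
      _ ≤ _ := mul_le_mul_of_nonneg_left hM₁l (Real.exp_pos _).le
  have tM₂ : 1 / (τ₂ * M₂) ≤ 1 / δ / n := by
    refine le_trans ?_ expb
    rw [Real.exp_neg, one_div]
    apply inv_anti₀ (Real.exp_pos _)
    calc Real.exp (n * δ) = τ₂ * Real.exp (n * r2) := by
          rw [hτ₂, ← Real.exp_add, mean_sub, hr2, hHP, hHX]
          congr 1
          ring
      _ ≤ _ := mul_le_mul_of_nonneg_left hM₂l (Real.exp_pos _).le
  have d1 := decErr_avg hPn A B (τ := τ₁) (Real.exp_pos _) v₀ hAB M₁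
  have d2 := decErr_avg hPn B A (τ := τ₂) (Real.exp_pos _) v₀ (fun v w h1 h2 => hAB v w h2 h1) M₂
  have b1 := bad_le hp (Prod.snd : 𝒳 × 𝒴 → 𝒴) hnpos hδ0 hτ₁
  have b2 := bad_le hp (Prod.fst : 𝒳 × 𝒴 → 𝒳) hnpos hδ0 hτ₂
  have dd := defect_avg hPn A B G hAB M₁ M₂
  have db : ∑ v, Pn p n v * (Real.log ((M₁ : ℝ) * M₂) - Real.log (distOf (Pn p n) G (G v)) +
        Real.log (ymass (Pn p n) A B G M₁ M₂ v)) ≤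
      Real.log 4 + (S0 / (2 * η) + n * η / 2) + (S1 / (2 * η) + n * η / 2) +
        (S2 / (2 * η) + n * η / 2) := by
    have pw : ∀ v, Pn p n v * (Real.log ((M₁ : ℝ) * M₂) - Real.log (distOf (Pn p n) G (G v)) +
        Real.log (ymass (Pn p n) A B G M₁ M₂ v)) ≤
        Pn p n v * Real.log 4 +
        Pn p n v * max 0 (Real.log M₁ + Real.log M₂ + ∑ i, (lp (v i) - lG (v i))) +
        Pn p n v * max 0 (Real.log M₁ + ∑ i, (lX (v i) - lG (v i))) +
        Pn p n v * max 0 (Real.log M₂ + ∑ i, (lY (v i) - lG (v i))) := by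
      intro v
      rcases (hPn.1 v).eq_or_lt with h | h
      · simp [← h]
      · rw [← mul_add, ← mul_add, ← mul_add]
        exact mul_le_mul_of_nonneg_left
          (defect_pointwise hp Prod.fst Prod.snd gg M₁ M₂ h) h.le
    refine (Finset.sum_le_sum fun v _ => pw v).trans ?_
    rw [Finset.sum_add_distrib, Finset.sum_add_distrib, Finset.sum_add_distrib, ← Finset.sum_mul,
      hPn.2, one_mul]
    have nΔ : (n : ℝ) * Δ = 8 * (n * δ) := by rw [hδ]; ring
    have q0 : Real.log M₁ + Real.log M₂ + n * mean p (fun w => lp w - lG w) ≤ 0 := by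
      have : (n : ℝ) * r1 + n * r2 + n * mean p (fun w => lp w - lG w) = 4 * (n * δ) - n * Δ := by
        rw [mean_sub, hr1, hr2, hΔ, hHP, hHX, hHY, hHG]
        ring
      linarith
    have q1 : Real.log M₁ + n * mean p (fun w => lX w - lG w) ≤ 0 := by
      have : (n : ℝ) * r1 + n * mean p (fun w => lX w - lG w) = 2 * (n * δ) - n * Δ := by
        rw [mean_sub, hr1, hΔ, hHP, hHX, hHY, hHG]
        ring
      have : 0 < n * δ := by positivity
      linarith
    have q2 : Real.log M₂ + n * mean p (fun w => lY w - lG w) ≤ 0 := by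
      have : (n : ℝ) * r2 + n * mean p (fun w => lY w - lG w) = 2 * (n * δ) - n * Δ := by
        rw [mean_sub, hr2, hΔ, hHP, hHX, hHY, hHG]
        ring
      have : 0 < n * δ := by positivity
      linarith
    have z0 := pospart hp _ hnpos hη0 q0
    have z1 := pospart hp _ hnpos hη0 q1
    have z2 := pospart hp _ hnpos hη0 q2
    linarith
  set N₁ : ℝ := ((Fintype.card ((Fin n → 𝒳) → Fin M₁) : ℕ) : ℝ) with hN₁
  set N₂ : ℝ := ((Fintype.card ((Fin n → 𝒴) → Fin M₂) : ℕ) : ℝ) with hN₂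
  have hN₁0 : 0 ≤ N₁ := by positivity
  have hN₂0 : 0 ≤ N₂ := by positivity
  have tot : ∑ k₁ : (Fin n → 𝒳) → Fin M₁, ∑ k₂ : (Fin n → 𝒴) → Fin M₂,
      (decErr (Pn p n) A B τ₁ v₀ k₁ + decErr (Pn p n) B A τ₂ v₀ k₂ +
        defect (Pn p n) A B G k₁ k₂ * (1 / n)) ≤ N₁ * N₂ * ε := by
    simp_rw [Finset.sum_add_distrib, ← Finset.sum_mul, Finset.sum_const, Finset.card_univ,
      nsmul_eq_mul]
    rw [← Finset.mul_sum, ← hN₁, ← hN₂]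
    have t1 : ∑ k₁ : (Fin n → 𝒳) → Fin M₁, decErr (Pn p n) A B τ₁ v₀ k₁ ≤
        N₁ * (U1 / (n * δ ^ 2) + 1 / δ / n) :=
      d1.trans (mul_le_mul_of_nonneg_left (add_le_add b1 tM₁) hN₁0)
    have t2 : ∑ k₂ : (Fin n → 𝒴) → Fin M₂, decErr (Pn p n) B A τ₂ v₀ k₂ ≤
        N₂ * (U2 / (n * δ ^ 2) + 1 / δ / n) :=
      d2.trans (mul_le_mul_of_nonneg_left (add_le_add b2 tM₂) hN₂0)
    have t3 := dd.trans (mul_le_mul_of_nonneg_left db (mul_nonneg hN₁0 hN₂0))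
    have t1' := mul_le_mul_of_nonneg_left t1 hN₂0
    have t2' := mul_le_mul_of_nonneg_left t2 hN₁0
    have t3' := mul_le_mul_of_nonneg_right t3 (show (0 : ℝ) ≤ 1 / n by positivity)
    refine (add_le_add (add_le_add t1' t2') t3').trans ?_
    have efin : N₂ * (N₁ * (U1 / (n * δ ^ 2) + 1 / δ / n)) +
        N₁ * (N₂ * (U2 / (n * δ ^ 2) + 1 / δ / n)) +
        N₁ * N₂ * (Real.log 4 + (S0 / (2 * η) + n * η / 2) + (S1 / (2 * η) + n * η / 2) +
        (S2 / (2 * η) + n * η / 2)) * (1 / n) = N₁ * N₂ * (C / n + 3 * η / 2) := by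
      rw [hC]
      field_simp
      ring
    refine efin.le.trans (mul_le_mul_of_nonneg_left ?_ (mul_nonneg hN₁0 hN₂0))
    have : C / n ≤ ε / 2 := by
      rw [div_le_iff₀ hn0]
      linarith
    rw [hη]
    linarith
  have tot' : ∑ k : ((Fin n → 𝒳) → Fin M₁) × ((Fin n → 𝒴) → Fin M₂),
      (decErr (Pn p n) A B τ₁ v₀ k.1 + decErr (Pn p n) B A τ₂ v₀ k.2 +
        defect (Pn p n) A B G k.1 k.2 * (1 / n)) ≤
      ∑ k : ((Fin n → 𝒳) → Fin M₁) × ((Fin n → 𝒴) → Fin M₂), ε := by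
    rw [Fintype.sum_prod_type]
    refine tot.trans (le_of_eq ?_)
    rw [Finset.sum_const, Finset.card_univ, Fintype.card_prod, nsmul_eq_mul, hN₁, hN₂]
    push_cast
    ring
  obtain ⟨⟨k₁, k₂⟩, -, hk⟩ := Finset.exists_le_of_sum_le
    (Finset.univ_nonempty) tot'
  have nn1 := decErr_nonneg hPn A B τ₁ v₀ k₁
  have nn2 := decErr_nonneg hPn B A τ₂ v₀ k₂
  have nn3 := defect_nonneg hPn A B G k₁ k₂
  have nn3' : 0 ≤ defect (Pn p n) A B G k₁ k₂ * (1 / n) := by positivity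
  simp only at hk
  refine ⟨n, M₁, M₂, hnpos, i1, i2, k₁, k₂, τ₁, τ₂, v₀, ?_, ?_⟩
  · change decErr (Pn p n) A B τ₁ v₀ k₁ + decErr (Pn p n) B A τ₂ v₀ k₂ ≤ ε
    linarith
  · refine (mutInfo_le_defect hPn A B G k₁ k₂).trans ?_
    have : defect (Pn p n) A B G k₁ k₂ * (1 / n) ≤ ε := by linarith
    rw [mul_one_div, div_le_iff₀ hn0] at this
    linarith

end SecEav

/-- **Theorem 3.** If `H(g(X,Y)) < I(X; Y)`, then for any functions `f₁`, `f₂`, the tuple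
`(pXY, f₁, f₂, g)` is asymptotically securely computable with privacy against an
eavesdropper. -/
theorem secure_computation_eavesdropper {𝒳 𝒴 𝒵₁ 𝒵₂ 𝒢 : Type}
    [Fintype 𝒳] [DecidableEq 𝒳] [Fintype 𝒴] [DecidableEq 𝒴]
    [Fintype 𝒵₁] [DecidableEq 𝒵₁] [Fintype 𝒵₂] [DecidableEq 𝒵₂]
    [Fintype 𝒢] [DecidableEq 𝒢]
    (pXY : 𝒳 × 𝒴 → ℝ) (hp : IsPMF pXY) (g : 𝒳 → 𝒴 → 𝒢)
    (hent : entRV pXY (fun xy => g xy.1 xy.2) < mutInfo pXY Prod.fst Prod.snd)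
    (f₁ : 𝒳 → 𝒴 → 𝒵₁) (f₂ : 𝒳 → 𝒴 → 𝒵₂) :
    AsympSecEavesdropper pXY f₁ f₂ g := by
  intro ε hε
  obtain ⟨n, M₁, M₂, hn, i1, i2, k₁, k₂, τ₁, τ₂, v₀, h1, h2⟩ :=
    SecEav.exists_good pXY hp g hent ε hε
  exact SecEav.protocol pXY hp g f₁ f₂ n M₁ M₂ hn k₁ k₂ τ₁ τ₂ v₀ ε h1 h2
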